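/- Let b ≥ 2 be an integer, let X ⊆ ℝ be bounded, let f be a piecewise C²-diffeomorphism of ℝ (there is a finite partition of ℝ into intervals on each of which f restricts to a C²-diffeomorphism onto its image, with the endpoints of these intervals lying outside X) that is differentiable at every point of X, and set Y = f(X). Then dim F_{b,Y}(Y) ≥ dim F_{b,X}(X) − bdim X, where dim denotes Hausdorff dimension and bdim denotes upper box (Minkowski) dimension. -/

import Mathlib

/-!
The proof compares the local difference sets of `X` and `Y = f(X)` point by point. A point
`x ∈ X` lies outside the frontiers of the pieces, so `f` is `C²` near `x` with `f' x ≠ 0`, hence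
strictly differentiable there, and a pair `u, v → x` satisfies `f u - f v = (u - v)(f' x + o(1))`.
Taking `b`-adic fractional parts, `F_{b,X}(x) + {f' x}_b ⊆ F_{b,Y}(f x)`
(`add_fracPart_mem_localDiffSet`). With `φ y = {f' y}_b` this gives
`F_{b,X}(X) ⊆ F_{b,Y}(Y) - φ(X)`.

The map `φ` is locally Lipschitz because `f` is `C²` (`exists_lipschitzOnWith_fracPart_deriv`), so
by the Lindelöf property `X` is a countable union of sets `B` on which `φ` is Lipschitz. Countable
stability of the Hausdorff dimension reduces the claim to
`dim (A - φ(B)) ≤ dim A + bdim X` for `B ⊆ X` (`dimH_sub_image_le`), an instance of the product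
inequality `dim (A × B) ≤ dim A + bdim B`: cover `A` efficiently by sets of diameter at most
`r k`, and for each `k` cover `X` by about `r k ^ (-bdim X)` balls of radius `r k`.
-/

open Filter Topology Set MeasureTheory ENNReal

/-- `T_a x = a x mod 1` on `[0,1]`. -/
noncomputable def Ta (a : ℕ) (x : ℝ) : ℝ := Int.fract (a * x)

/-- `T_a` on the circle `ℝ/ℤ`. -/
noncomputable def TaC (a : ℕ) (x : AddCircle (1:ℝ)) : AddCircle (1:ℝ) := a • x

/-- the `a`-adic fractional part `{s}_a = -log_a |s| mod 1`, as an element of `ℝ/ℤ`. -/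
noncomputable def fracPart (a : ℕ) (s : ℝ) : AddCircle (1:ℝ) :=
  ((-Real.logb a |s| : ℝ) : AddCircle (1:ℝ))

/-- the `a`-adic local difference set `F_{a,X}(x)` of `X ⊆ ℝ` at `x`. -/
def localDiffSet (a : ℕ) (X : Set ℝ) (x : ℝ) : Set (AddCircle (1:ℝ)) :=
  { t | ∃ u v : ℕ → ℝ,
      (∀ n, u n ∈ X) ∧ (∀ n, v n ∈ X) ∧ (∀ n, u n ≠ v n) ∧
      Tendsto u atTop (nhds x) ∧ Tendsto v atTop (nhds x) ∧
      Tendsto (fun n => fracPart a (u n - v n)) atTop (nhds t) }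

/-- `F_{a,X}(X) = ⋃_{x ∈ X} F_{a,X}(x)`. -/
def localDiffSetTotal (a : ℕ) (X : Set ℝ) : Set (AddCircle (1:ℝ)) :=
  ⋃ x ∈ X, localDiffSet a X x

/-- the `a`-adic local difference set of `X ⊆ ℝ/ℤ` at `x ∈ ℝ/ℤ`, defined via lifts:
the difference `u n - v n` is lifted to a real number `d n` tending to `0`. -/
def localDiffSetC (a : ℕ) (X : Set (AddCircle (1:ℝ))) (x : AddCircle (1:ℝ)) :
    Set (AddCircle (1:ℝ)) :=
  { t | ∃ (u v : ℕ → AddCircle (1:ℝ)) (d : ℕ → ℝ),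
      (∀ n, u n ∈ X) ∧ (∀ n, v n ∈ X) ∧ (∀ n, u n ≠ v n) ∧ (∀ n, d n ≠ 0) ∧
      (∀ n, ((d n : ℝ) : AddCircle (1:ℝ)) = u n - v n) ∧
      Tendsto u atTop (nhds x) ∧ Tendsto v atTop (nhds x) ∧
      Tendsto d atTop (nhds 0) ∧
      Tendsto (fun n => fracPart a (d n)) atTop (nhds t) }

/-- `F_{a,X}(X)` for `X ⊆ ℝ/ℤ`. -/
def localDiffSetTotalC (a : ℕ) (X : Set (AddCircle (1:ℝ))) : Set (AddCircle (1:ℝ)) :=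
  ⋃ x ∈ X, localDiffSetC a X x

/-- a point whose forward orbit `{T_a^n x : n ≥ 1}` is dense in `X`. -/
noncomputable def IsTransitivePoint (a : ℕ) (X : Set ℝ) (x : ℝ) : Prop :=
  X ⊆ closure {y | ∃ n : ℕ, 1 ≤ n ∧ (Ta a)^[n] x = y}

/-- a `C²`-diffeomorphism of `ℝ`. -/
def IsC2Diffeo (f : ℝ → ℝ) : Prop :=
  ContDiff ℝ 2 f ∧ Function.Bijective f ∧ ∀ x, deriv f x ≠ 0

/-- a `C¹`-diffeomorphism of `ℝ`. -/
def IsC1Diffeo (f : ℝ → ℝ) : Prop :=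
  ContDiff ℝ 1 f ∧ Function.Bijective f ∧ ∀ x, deriv f x ≠ 0

/-- piecewise curved: `f` is `C¹` and `f'` is strictly monotone near every point outside
a discrete set. -/
def PiecewiseCurved (f : ℝ → ℝ) : Prop :=
  ContDiff ℝ 1 f ∧ ∃ E : Set ℝ, DiscreteTopology E ∧
    ∀ x : ℝ, x ∉ E → ∃ U ∈ nhds x, StrictMonoOn (deriv f) U ∨ StrictAntiOn (deriv f) U

/-- `X` is self-restricted: `X - X ≠ [0,1] mod 1`. -/
def SelfRestricted (X : Set ℝ) : Prop :=
  {t : AddCircle (1:ℝ) | ∃ x ∈ X, ∃ y ∈ X, ((x - y : ℝ) : AddCircle (1:ℝ)) = t} ≠ Set.univ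

/-- the covering number `N(X,r)`: minimal number of `r`-balls needed to cover `X`. -/
noncomputable def coveringNumber (r : ℝ) (X : Set ℝ) : ℝ≥0∞ :=
  ⨅ (s : Finset ℝ) (_ : X ⊆ ⋃ c ∈ s, Metric.ball c r), (s.card : ℝ≥0∞)

/-- upper box (Minkowski) dimension. -/
noncomputable def upperBoxDim (X : Set ℝ) : ℝ≥0∞ :=
  Filter.limsup
    (fun r : ℝ =>
      if coveringNumber r X = ⊤ then ⊤
      else ENNReal.ofReal (Real.log (coveringNumber r X).toReal / Real.log (1 / r)))
    (nhdsWithin 0 (Set.Ioi (0:ℝ)))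

/-- a probability measure has dimension `t`: it gives mass `< 1` to every Borel set of
Hausdorff dimension `< t`, and is supported on a Borel set of Hausdorff dimension `t`. -/
def HasDimension (μ : Measure ℝ) (t : ℝ≥0∞) : Prop :=
  (∀ E : Set ℝ, MeasurableSet E → dimH E < t → μ E < 1) ∧
  ∃ S : Set ℝ, MeasurableSet S ∧ dimH S = t ∧ μ Sᶜ = 0

/-- a piecewise `C²`-diffeomorphism of `ℝ` (relative to `X`): a finite partition of `ℝ` into
intervals, on each of which `f` restricts to a `C²`-diffeomorphism onto its image (except
possibly at the endpoints, which lie outside `X`). -/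
def IsPiecewiseC2Diffeo (f : ℝ → ℝ) (X : Set ℝ) : Prop :=
  ∃ (N : ℕ) (I : Fin N → Set ℝ),
    (∀ i, (I i).OrdConnected) ∧
    (⋃ i, I i) = Set.univ ∧
    Pairwise (Function.onFun Disjoint I) ∧
    (∀ i, ContinuousOn f (I i)) ∧
    (∀ i, Set.InjOn f (I i)) ∧
    (∀ i, ContDiffOn ℝ 2 f (interior (I i))) ∧
    (∀ i, ∀ x ∈ interior (I i), deriv f x ≠ 0) ∧
    (∀ i, frontier (I i) ∩ X = ∅)

open scoped NNReal

/-! ### Hausdorff dimension of `A - g(B)` -/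

/-- A strict upper bound `σ` on the upper box dimension yields, at all small scales `r`, covers
by at most `r ^ (-σ)` balls of radius `r`. -/
lemma eventually_exists_cover {X : Set ℝ} {σ : ℝ≥0} (h : upperBoxDim X < σ) :
    ∃ R > (0 : ℝ), ∀ r, 0 < r → r < R → ∃ F : Finset ℝ, X ⊆ ⋃ c ∈ F, Metric.ball c r ∧
      (F.card : ℝ≥0∞) * ENNReal.ofReal r ^ (σ : ℝ) ≤ 1 := by
  have hev := Filter.eventually_lt_of_limsup_lt h
  obtain ⟨R, hR, hRs⟩ := mem_nhdsGT_iff_exists_Ioo_subset.1 hev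
  refine ⟨min R 1, lt_min hR one_pos, fun r hr hrR => ?_⟩
  have hr1 : r < 1 := hrR.trans_le (min_le_right _ _)
  have h1 := hRs ⟨hr, hrR.trans_le (min_le_left _ _)⟩
  simp only [mem_ofPred_eq] at h1
  split_ifs at h1 with htop
  · simp at h1
  · have hlog : 0 < Real.log (1 / r) := Real.log_pos (by rw [lt_div_iff₀ hr]; linarith)
    have h2 : Real.log (coveringNumber r X).toReal / Real.log (1 / r) < σ := by
      rw [← ENNReal.ofReal_coe_nnreal] at h1
      exact (ENNReal.ofReal_lt_ofReal_iff'.1 h1).1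
    have h3 : (coveringNumber r X).toReal < (1 / r) ^ (σ : ℝ) := by
      have hpos : 0 < (1 / r) ^ (σ : ℝ) := by positivity
      rcases (ENNReal.toReal_nonneg (a := coveringNumber r X)).eq_or_lt with h0 | h0
      · rw [← h0]; exact hpos
      · rw [div_lt_iff₀ hlog] at h2
        rw [← Real.log_lt_log_iff h0 hpos, Real.log_rpow (by positivity)]
        exact h2
    have h4 : coveringNumber r X < ENNReal.ofReal ((1 / r) ^ (σ : ℝ)) :=
      (ENNReal.lt_ofReal_iff_toReal_lt htop).2 h3
    obtain ⟨F, hF⟩ := iInf_lt_iff.1 h4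
    obtain ⟨hXF, hcard⟩ := iInf_lt_iff.1 hF
    refine ⟨F, hXF, ?_⟩
    calc (F.card : ℝ≥0∞) * ENNReal.ofReal r ^ (σ : ℝ)
        ≤ ENNReal.ofReal ((1 / r) ^ (σ : ℝ)) * ENNReal.ofReal r ^ (σ : ℝ) := by gcongr
      _ = 1 := by
        rw [ENNReal.ofReal_rpow_of_pos hr, ← ENNReal.ofReal_mul (by positivity),
          ← Real.mul_rpow (by positivity) hr.le, one_div, inv_mul_cancel₀ hr.ne']
        simp

/-- A set of zero `s`-dimensional Hausdorff measure has countable covers with positive scales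
`r k` dominating the diameters, with `∑ r k ^ s` arbitrarily small. Positivity matters because
a box count at scale `r k` is inserted later, and pieces of the cover may be single points. -/
lemma exists_cover_of_hausdorffMeasure_eq_zero {Z : Type*} [EMetricSpace Z] [MeasurableSpace Z]
    [BorelSpace Z] {A : Set Z} {s : ℝ} (hs : 0 < s) (hA : μH[s] A = 0) {R : ℝ} (hR : 0 < R) :
    ∃ (t : ℕ → Set Z) (r : ℕ → ℝ), A ⊆ ⋃ k, t k ∧ (∀ k, 0 < r k) ∧ (∀ k, r k < R) ∧
      (∀ k, Metric.ediam (t k) ≤ ENNReal.ofReal (r k)) ∧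
      ∑' k, ENNReal.ofReal (r k) ^ s ≤ ENNReal.ofReal R := by
  set δ : ℝ := min R (R ^ s) with hδ
  have hδ0 : 0 < δ := lt_min hR (by positivity)
  have hδ2 : ENNReal.ofReal (δ / 2) ≠ 0 := by simpa using hδ0
  obtain ⟨ε, hε0, hε⟩ := ENNReal.exists_pos_sum_of_countable' hδ2 ℕ
  rw [Measure.hausdorffMeasure_apply] at hA
  have hA1 := (iSup₂_le_iff.1 hA.le) 1 one_pos
  have hA2 := lt_of_le_of_lt hA1 (pos_iff_ne_zero.2 hδ2)
  obtain ⟨t, ht⟩ := iInf_lt_iff.1 hA2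
  obtain ⟨htA, ht⟩ := iInf_lt_iff.1 ht
  obtain ⟨-, ht⟩ := iInf_lt_iff.1 ht
  have hd : ∀ k, (⨆ _ : (t k).Nonempty, Metric.ediam (t k) ^ s) = Metric.ediam (t k) ^ s := by
    intro k
    rcases (t k).eq_empty_or_nonempty with h | h
    · simp [h, hs]
    · simp [h]
  simp only [hd] at ht
  -- `w k` will be the `s`-th power of the scale `r k`
  set w : ℕ → ℝ≥0∞ := fun k => Metric.ediam (t k) ^ s + ε k with hw
  have hsum : ∑' k, w k < ENNReal.ofReal δ := by
    rw [hw, ENNReal.tsum_add, ← add_halves δ, ENNReal.ofReal_add (by positivity) (by positivity)]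
    exact ENNReal.add_lt_add ht hε
  have hwδ : ∀ k, w k < ENNReal.ofReal δ := fun k => (ENNReal.le_tsum k).trans_lt hsum
  have hwtop : ∀ k, w k ≠ ⊤ := fun k => (hwδ k).ne_top
  have hw0 : ∀ k, 0 < w k := fun k => (hε0 k).trans_le le_add_self
  have hwpos : ∀ k, 0 < (w k).toReal := fun k => ENNReal.toReal_pos (hw0 k).ne' (hwtop k)
  have hrw : ∀ k, ENNReal.ofReal ((w k).toReal ^ (1 / s)) = w k ^ (1 / s) := by
    intro k
    rw [← ENNReal.ofReal_rpow_of_pos (hwpos k), ENNReal.ofReal_toReal (hwtop k)]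
  refine ⟨t, fun k => (w k).toReal ^ (1 / s), htA, fun k => Real.rpow_pos_of_pos (hwpos k) _,
    fun k => ?_, fun k => ?_, ?_⟩
  · have h1 : (w k).toReal < R ^ s :=
      ((ENNReal.lt_ofReal_iff_toReal_lt (hwtop k)).1 (hwδ k)).trans_le (min_le_right _ _)
    calc (w k).toReal ^ (1 / s) < (R ^ s) ^ (1 / s) :=
          Real.rpow_lt_rpow (hwpos k).le h1 (by positivity)
      _ = R := by rw [← Real.rpow_mul hR.le, mul_one_div_cancel hs.ne', Real.rpow_one]
  · rw [hrw, one_div, ENNReal.le_rpow_inv_iff hs]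
    exact le_self_add
  · simp only [hrw, ← ENNReal.rpow_mul, one_div_mul_cancel hs.ne', ENNReal.rpow_one]
    exact hsum.le.trans (ENNReal.ofReal_le_ofReal (min_le_left _ _))

/-- Pair each piece of a cover of `A`, at scale `r`, with a cover of `B` by `r ^ (-σ)` balls of
radius `r`: the resulting pieces of `A - g B` have diameter `O(r)`, so their total
`(s + σ)`-dimensional cost is `O(∑ r ^ s)`. -/
lemma hausdorffMeasure_sub_image_eq_zero {G : Type*} [NormedAddCommGroup G] [MeasurableSpace G]
    [BorelSpace G] {A : Set G} {X B : Set ℝ} (hBX : B ⊆ X) {g : ℝ → G} {K : ℝ≥0}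
    (hg : LipschitzOnWith K g B) {s : ℝ} (hs : 0 < s) (hA : μH[s] A = 0)
    {σ : ℝ≥0} (hσ : upperBoxDim X < σ) :
    μH[s + σ] (image2 (fun a x => a - g x) A B) = 0 := by
  obtain ⟨R₀, hR₀, hcov⟩ := eventually_exists_cover hσ
  set ρ : ℕ → ℝ := fun n => min R₀ (1 / ((n : ℝ) + 1)) with hρ
  have hρ0 : ∀ n, 0 < ρ n := fun n => lt_min hR₀ (by positivity)
  have hρlim : Tendsto (fun n => ENNReal.ofReal (ρ n)) atTop (𝓝 0) := by
    have : Tendsto (fun n : ℕ => ENNReal.ofReal (1 / ((n : ℝ) + 1))) atTop (𝓝 0) := by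
      simpa using ENNReal.tendsto_ofReal tendsto_one_div_add_atTop_nhds_zero_nat
    exact tendsto_of_tendsto_of_tendsto_of_le_of_le tendsto_const_nhds this
      (fun _ => zero_le) (fun n => ENNReal.ofReal_le_ofReal (min_le_right _ _))
  choose t r htA hr0 hrρ hdiam hsum using fun n =>
    exists_cover_of_hausdorffMeasure_eq_zero hs hA (hρ0 n)
  choose F hF hFcard using fun n k =>
    hcov (r n k) (hr0 n k) ((hrρ n k).trans_le (min_le_left _ _))
  set C : ℝ≥0∞ := 1 + K * 2 with hC
  have hCtop : C ≠ ⊤ := by finiteness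
  set T : ∀ n, (Σ k, {c // c ∈ F n k}) → Set G := fun n p =>
    image2 (fun a x => a - g x) (t n p.1) (B ∩ Metric.ball p.2.1 (r n p.1)) with hT
  have hTd : ∀ n p, Metric.ediam (T n p) ≤ C * ENNReal.ofReal (r n p.1) := by
    rintro n ⟨k, c⟩
    refine Metric.ediam_le ?_
    rintro _ ⟨a, ha, x, hx, rfl⟩ _ ⟨a', ha', x', hx', rfl⟩
    have h1 : edist (a - g x) (a' - g x') ≤ edist a a' + edist (g x) (g x') := by
      rw [sub_eq_add_neg, sub_eq_add_neg]
      exact (edist_add_add_le _ _ _ _).trans (by rw [edist_neg_neg])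
    have h2 : edist x x' ≤ 2 * ENNReal.ofReal (r n k) := by
      rw [edist_dist, ← ENNReal.ofReal_ofNat, ← ENNReal.ofReal_mul (by norm_num)]
      refine ENNReal.ofReal_le_ofReal ?_
      have e1 := Metric.mem_ball.1 hx.2
      have e2 := Metric.mem_ball.1 hx'.2
      have := dist_triangle_right x x' (c : ℝ)
      dsimp only at e1 e2
      linarith
    calc edist (a - g x) (a' - g x') ≤ edist a a' + edist (g x) (g x') := h1
      _ ≤ ENNReal.ofReal (r n k) + K * (2 * ENNReal.ofReal (r n k)) := by
        gcongr
        · exact (Metric.edist_le_ediam_of_mem ha ha').trans (hdiam n k)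
        · exact (hg hx.1 hx'.1).trans (by gcongr)
      _ = C * ENNReal.ofReal (r n k) := by rw [hC]; ring
  have key := Measure.hausdorffMeasure_le_liminf_tsum (s + σ : ℝ)
    (image2 (fun a x => a - g x) A B) (l := atTop) (fun n => C * ENNReal.ofReal (ρ n))
    (by simpa using ENNReal.Tendsto.const_mul hρlim (Or.inr hCtop)) T
    (Eventually.of_forall fun n p => (hTd n p).trans (by
      gcongr; exact (hrρ n p.1).le))
    (Eventually.of_forall fun n => by
      rintro _ ⟨a, ha, x, hx, rfl⟩
      obtain ⟨k, hk⟩ := mem_iUnion.1 (htA n ha)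
      obtain ⟨c, hc, hxc⟩ := mem_iUnion₂.1 (hF n k (hBX hx))
      exact mem_iUnion.2 ⟨⟨k, c, hc⟩, a, hk, x, ⟨hx, hxc⟩, rfl⟩)
  have hbound : ∀ n, ∑' p, Metric.ediam (T n p) ^ (s + σ : ℝ)
      ≤ C ^ (s + σ : ℝ) * ENNReal.ofReal (ρ n) := by
    intro n
    rw [ENNReal.tsum_sigma']
    calc ∑' k, ∑' c : {c // c ∈ F n k}, Metric.ediam (T n ⟨k, c⟩) ^ (s + σ : ℝ)
        ≤ ∑' k, C ^ (s + σ : ℝ) * ENNReal.ofReal (r n k) ^ s := by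
          refine ENNReal.tsum_le_tsum fun k => ?_
          have hr' : ENNReal.ofReal (r n k) ≠ 0 := by simpa using hr0 n k
          calc ∑' c : {c // c ∈ F n k}, Metric.ediam (T n ⟨k, c⟩) ^ (s + σ : ℝ)
              ≤ ∑' _ : {c // c ∈ F n k}, (C * ENNReal.ofReal (r n k)) ^ (s + σ : ℝ) := by
                refine ENNReal.tsum_le_tsum fun c => ?_
                gcongr
                exact hTd n ⟨k, c⟩
            _ = (F n k).card * (C * ENNReal.ofReal (r n k)) ^ (s + σ : ℝ) := by
                rw [tsum_fintype]; simp
            _ = C ^ (s + σ : ℝ) * ENNReal.ofReal (r n k) ^ s *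
                  ((F n k).card * ENNReal.ofReal (r n k) ^ (σ : ℝ)) := by
                rw [ENNReal.mul_rpow_of_nonneg _ _ (by positivity),
                  ENNReal.rpow_add (x := ENNReal.ofReal (r n k)) _ _ hr' ENNReal.ofReal_ne_top]
                ring
            _ ≤ C ^ (s + σ : ℝ) * ENNReal.ofReal (r n k) ^ s * 1 := by
                gcongr; exact hFcard n k
            _ = _ := mul_one _
      _ = C ^ (s + σ : ℝ) * ∑' k, ENNReal.ofReal (r n k) ^ s := ENNReal.tsum_mul_left
      _ ≤ _ := by gcongr; exact hsum n
  have hlim : Tendsto (fun n => ∑' p, Metric.ediam (T n p) ^ (s + σ : ℝ)) atTop (𝓝 0) := by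
    have : Tendsto (fun n => C ^ (s + σ : ℝ) * ENNReal.ofReal (ρ n)) atTop (𝓝 0) := by
      simpa using ENNReal.Tendsto.const_mul hρlim
        (Or.inr (ENNReal.rpow_ne_top_of_nonneg (by positivity) hCtop))
    exact tendsto_of_tendsto_of_tendsto_of_le_of_le tendsto_const_nhds this
      (fun _ => zero_le) hbound
  rw [hlim.liminf_eq] at key
  exact le_antisymm key zero_le

/-- The product inequality `dim (A × B) ≤ dim A + bdim B`, pushed forward along
`(a, x) ↦ a - g x`. Bounding by the box dimension of a larger set `X` lets the same bound serve
all pieces `B` of a decomposition of `X`. -/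
lemma dimH_sub_image_le {G : Type*} [NormedAddCommGroup G] {A : Set G} {X B : Set ℝ}
    (hBX : B ⊆ X) {g : ℝ → G} {K : ℝ≥0} (hg : LipschitzOnWith K g B) :
    dimH (image2 (fun a x => a - g x) A B) ≤ dimH A + upperBoxDim X := by
  borelize G
  refine ENNReal.le_of_forall_pos_le_add fun ε hε hlt => ?_
  have hA : dimH A ≠ ⊤ := (lt_of_le_of_lt le_self_add hlt).ne
  have hX : upperBoxDim X ≠ ⊤ := (lt_of_le_of_lt le_add_self hlt).ne
  lift dimH A to ℝ≥0 using hA with α hα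
  lift upperBoxDim X to ℝ≥0 using hX with β hβ
  have hε2 : 0 < ε / 2 := half_pos hε
  have h1 : μH[((α + ε / 2 : ℝ≥0) : ℝ)] A = 0 := by
    apply hausdorffMeasure_of_dimH_lt
    rw [← hα]
    exact_mod_cast lt_add_of_pos_right α hε2
  have h2 : upperBoxDim X < ((β + ε / 2 : ℝ≥0) : ℝ≥0∞) := by
    rw [← hβ]
    exact_mod_cast lt_add_of_pos_right β hε2
  have h3 := hausdorffMeasure_sub_image_eq_zero hBX hg
    (by exact_mod_cast lt_of_lt_of_le hε2 le_add_self) h1 h2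
  rw [← NNReal.coe_add] at h3
  have h4 := dimH_le_of_hausdorffMeasure_ne_top (h3.trans_ne ENNReal.zero_ne_top)
  refine h4.trans (le_of_eq ?_)
  have : α + ε / 2 + (β + ε / 2) = α + β + ε := by
    rw [add_add_add_comm, add_halves]
  rw [this]
  push_cast
  rfl

/-! ### Local difference sets under a `C²` map -/

lemma fracPart_mul (b : ℕ) {x y : ℝ} (hx : x ≠ 0) (hy : y ≠ 0) :
    fracPart b (x * y) = fracPart b x + fracPart b y := by
  unfold fracPart
  rw [abs_mul, Real.logb_mul (abs_ne_zero.2 hx) (abs_ne_zero.2 hy), neg_add, AddCircle.coe_add]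

lemma continuousAt_fracPart (b : ℕ) {x : ℝ} (hx : x ≠ 0) : ContinuousAt (fracPart b) x := by
  unfold fracPart Real.logb
  have h1 : ContinuousAt (fun s : ℝ => -(Real.log |s| / Real.log b)) x :=
    ((continuous_abs.continuousAt.log (abs_ne_zero.2 hx)).div_const _).neg
  exact (AddCircle.continuous_mk' (1 : ℝ)).continuousAt.comp h1

/-- Near `x` the differences satisfy `f u - f v = (u - v) (f' x + o(1))`, so `f` translates each
local difference set by `{f' x}_b`. -/
lemma add_fracPart_mem_localDiffSet {b : ℕ} {X : Set ℝ} {f : ℝ → ℝ} {x f' : ℝ}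
    (hf : HasStrictDerivAt f f' x) (hf' : f' ≠ 0) {t : AddCircle (1 : ℝ)}
    (ht : t ∈ localDiffSet b X x) : t + fracPart b f' ∈ localDiffSet b (f '' X) (f x) := by
  obtain ⟨u, v, hu, hv, huv, hux, hvx, hlim⟩ := ht
  have hq : Tendsto (fun n => (f (u n) - f (v n)) / (u n - v n)) atTop (𝓝 f') := by
    have h1 := (hf.isLittleO.comp_tendsto (hux.prodMk_nhds hvx)).tendsto_div_nhds_zero
    have h2 := h1.add_const f'
    rw [zero_add] at h2
    refine h2.congr fun n => ?_
    have : u n - v n ≠ 0 := sub_ne_zero.2 (huv n)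
    simp only [Function.comp_apply, ContinuousLinearMap.toSpanSingleton_apply, smul_eq_mul]
    field_simp
    ring
  -- a tail of the sequences has distinct images
  obtain ⟨N, hN⟩ := eventually_atTop.1 (hq.eventually_ne hf')
  have hne : ∀ n, f (u (n + N)) - f (v (n + N)) ≠ 0 := fun n h =>
    hN (n + N) le_add_self (by rw [h, zero_div])
  have hcont : ContinuousAt f x := hf.hasDerivAt.continuousAt
  have hsh := tendsto_add_atTop_nat N
  refine ⟨fun n => f (u (n + N)), fun n => f (v (n + N)), fun n => mem_image_of_mem f (hu _),
    fun n => mem_image_of_mem f (hv _), fun n => sub_ne_zero.1 (hne n),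
    (hcont.tendsto.comp hux).comp hsh, (hcont.tendsto.comp hvx).comp hsh, ?_⟩
  have h3 := (hlim.add ((continuousAt_fracPart b hf').tendsto.comp hq)).comp hsh
  refine h3.congr fun n => ?_
  have h4 : u (n + N) - v (n + N) ≠ 0 := sub_ne_zero.2 (huv _)
  simp only [Function.comp_apply]
  rw [← fracPart_mul b h4 (hN (n + N) le_add_self), mul_div_cancel₀ _ h4]

/-- For `f` of class `C²` with `f' x ≠ 0`, the shift `{f' y}_b` depends on `y` in a Lipschitz way
near `x`. -/
lemma exists_lipschitzOnWith_fracPart_deriv (b : ℕ) {f : ℝ → ℝ} {x : ℝ} (hf : ContDiffAt ℝ 2 f x)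
    (hf' : deriv f x ≠ 0) :
    ∃ K : ℝ≥0, ∃ U ∈ 𝓝 x, LipschitzOnWith K (fun y => fracPart b (deriv f y)) U := by
  have h1 : ContDiffAt ℝ 1 (deriv f) x := ContDiffAt.derivWithin hf (by norm_num)
  have h2 : ContDiffAt ℝ 1 (fun y => -(Real.log (deriv f y) / Real.log b)) x :=
    ((h1.log hf').div_const _).neg
  obtain ⟨K, U, hU, hK⟩ := h2.exists_lipschitzOnWith
  refine ⟨K, U, hU, fun y hy z hz => le_trans ?_ (hK hy hz)⟩
  simp only [fracPart, Real.logb]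
  rw [Real.log_abs, Real.log_abs, edist_dist, edist_dist, dist_eq_norm, dist_eq_norm,
    ← AddCircle.coe_sub]
  exact ENNReal.ofReal_le_ofReal (QuotientAddGroup.norm_mk_le_norm)

/-- **Proposition 3.2, second part.** The same holds if `f` is a piecewise
`C²`-diffeomorphism of `ℝ` that is differentiable on `X`. -/
theorem dimH_localDiffSetTotal_image_ge_piecewise
    (b : ℕ) (hb : 2 ≤ b) (X : Set ℝ) (hXbdd : Bornology.IsBounded X)
    (f : ℝ → ℝ) (hf : IsPiecewiseC2Diffeo f X)
    (hdiff : ∀ x ∈ X, DifferentiableAt ℝ f x) :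
    dimH (localDiffSetTotal b X) - upperBoxDim X ≤ dimH (localDiffSetTotal b (f '' X)) := by
  obtain ⟨N, I, -, hcov, -, -, -, hC2, hder, hfr⟩ := hf
  have hloc : ∀ x ∈ X, ContDiffAt ℝ 2 f x ∧ deriv f x ≠ 0 := by
    intro x hx
    obtain ⟨i, hi⟩ := mem_iUnion.1 (hcov ▸ mem_univ x)
    have hxi : x ∈ interior (I i) := by
      by_contra h
      have : x ∈ frontier (I i) ∩ X := ⟨⟨subset_closure hi, h⟩, hx⟩
      rw [hfr i] at this
      exact this
    exact ⟨(hC2 i).contDiffAt (isOpen_interior.mem_nhds hxi), hder i x hxi⟩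
  have hlip : ∀ x, ∃ U : Set ℝ, x ∈ X → U ∈ 𝓝 x ∧
      ∃ K : ℝ≥0, LipschitzOnWith K (fun y => fracPart b (deriv f y)) U := by
    intro x
    by_cases hx : x ∈ X
    · obtain ⟨K, U, hU, hK⟩ :=
        exists_lipschitzOnWith_fracPart_deriv b (hloc x hx).1 (hloc x hx).2
      exact ⟨U, fun _ => ⟨hU, K, hK⟩⟩
    · exact ⟨∅, fun h => absurd h hx⟩
  choose U hU using hlip
  obtain ⟨D, hDX, hDc, hD⟩ := TopologicalSpace.countable_cover_nhdsWithin
    (s := X) (f := U) fun x hx => mem_nhdsWithin_of_mem_nhds (hU x hx).1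
  rw [tsub_le_iff_right]
  have hsub : localDiffSetTotal b X ⊆ ⋃ d ∈ D,
      image2 (fun a y => a - fracPart b (deriv f y)) (localDiffSetTotal b (f '' X))
        (X ∩ U d) := by
    intro t ht
    obtain ⟨x, hx, htx⟩ := mem_iUnion₂.1 ht
    obtain ⟨d, hd, hxd⟩ := mem_iUnion₂.1 (hD hx)
    refine mem_iUnion₂.2 ⟨d, hd, t + fracPart b (deriv f x), ?_, x, ⟨hx, hxd⟩, ?_⟩
    · exact mem_iUnion₂.2 ⟨f x, mem_image_of_mem f hx, add_fracPart_mem_localDiffSet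
        ((hloc x hx).1.hasStrictDerivAt (by norm_num)) (hloc x hx).2 htx⟩
    · exact add_sub_cancel_right _ _
  refine (dimH_mono hsub).trans ?_
  rw [dimH_bUnion hDc]
  refine iSup₂_le fun d hd => ?_
  obtain ⟨-, K, hK⟩ := hU d (hDX hd)
  exact dimH_sub_image_le inter_subset_left (hK.mono inter_subset_right)
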